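/- The spectrum of the piecewise centrosymmetric Jacobi matrix J (as a complex matrix) equals { z ∈ ℂ : R(z) ∈ σ(Δ_p) and R(z) ∉ {0,2} } ∪ σ(J_cs), where σ denotes the spectrum over ℂ. -/

import Mathlib

open Polynomial

/-- The `(n0+1) × (n0+1)` centrosymmetric tridiagonal Jacobi matrix. -/
noncomputable def Jcs (n0 : ℕ) (a b : ℕ → ℝ) :
    Matrix (Fin (n0 + 1)) (Fin (n0 + 1)) ℝ :=
  Matrix.of fun i j =>
    if (j : ℕ) = (i : ℕ) then b (i : ℕ)
    else if (j : ℕ) = (i : ℕ) + 1 then a ((i : ℕ) + 1)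
    else if (i : ℕ) = (j : ℕ) + 1 then a (n0 - (j : ℕ))
    else 0

/-- The `(n0−1) × (n0−1)` Dirichlet restriction of `Jcs`, obtained by deleting the
first and last rows and columns. -/
noncomputable def JDcs (n0 : ℕ) (a b : ℕ → ℝ) :
    Matrix (Fin (n0 - 1)) (Fin (n0 - 1)) ℝ :=
  Matrix.of fun i j =>
    Jcs n0 a b ⟨(i : ℕ) + 1, by have := i.isLt; omega⟩ ⟨(j : ℕ) + 1, by have := j.isLt; omega⟩

/-- The `(k0+1) × (k0+1)` probabilistic path Laplacian `Δ_p` with transition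
probabilities `p k`: diagonal entries `1`, superdiagonal `Δ_p(k, k+1) = −p k`, and
subdiagonal `Δ_p(k, k−1) = −(1 − p k)`. -/
noncomputable def DeltaP (k0 : ℕ) (p : ℕ → ℝ) :
    Matrix (Fin (k0 + 1)) (Fin (k0 + 1)) ℝ :=
  Matrix.of fun i j =>
    if (j : ℕ) = (i : ℕ) then 1
    else if (j : ℕ) = (i : ℕ) + 1 then -p (i : ℕ)
    else if (i : ℕ) = (j : ℕ) + 1 then -(1 - p (i : ℕ))
    else 0

/-- The `(k0·n0+1) × (k0·n0+1)` piecewise centrosymmetric Jacobi matrix obtained by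
substituting copies of `J_cs` between consecutive vertices of a path of length `k0`
with transition probabilities `p k`:  `J(x,x) = b (x % n0)`; if `x` is not a multiple
of `n0` then `J(x, x+1) = a (x % n0 + 1)` and `J(x, x−1) = a (n0 + 1 − x % n0)`; if
`x = k·n0` then `J(x, x+1) = p k · a 1` and `J(x, x−1) = (1 − p k) · a 1`. -/
noncomputable def Jsub (n0 k0 : ℕ) (a b p : ℕ → ℝ) :
    Matrix (Fin (k0 * n0 + 1)) (Fin (k0 * n0 + 1)) ℝ :=
  Matrix.of fun x y =>
    if (y : ℕ) = (x : ℕ) then b ((x : ℕ) % n0)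
    else if (y : ℕ) = (x : ℕ) + 1 then
      (if (x : ℕ) % n0 = 0 then p ((x : ℕ) / n0) * a 1 else a ((x : ℕ) % n0 + 1))
    else if (x : ℕ) = (y : ℕ) + 1 then
      (if (x : ℕ) % n0 = 0 then (1 - p ((x : ℕ) / n0)) * a 1 else a (n0 + 1 - (x : ℕ) % n0))
    else 0

/-!
Solve the eigenvalue equation from left to right across one cell. The transfer matrix sends the
value and the residual at the left end to those at the right end, and since the cell is
invariant under reflection this matrix squares to `1`. Its first column consists of
`c = 1 - R z` and of a number `e` that vanishes exactly when `z` is in the spectrum of the cell.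

Start along the chain with value `1` and residual `0`. By the involution every residual is a
multiple of `e`, the values at the path vertices solve the eigenvalue equation of the path
Laplacian at `1 - c = R z`, and the final residual is `e * q` with `q` depending only on `c` and
on the transition probabilities. Hence `z` is in the spectrum of the chain if and only if
`e = 0` or `q = 0`.

On the path, `R z` is in the spectrum if and only if `(1 - c ^ 2) * q = 0`. Where `c ^ 2 = 1`,
that is `R z ∈ {0, 2}`, the flux `q` is a power of `c` times a positive number, so these two
points do not come from `q = 0`.
-/

section Ring

variable {R : Type*} {N : ℕ} {l d u : ℕ → R} {z : R} {g : ℕ → R}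

/-- The tridiagonal matrix on `0, …, N` with subdiagonal `l`, diagonal `d` and superdiagonal `u`,
all three indexed by the row; the values `l 0` and `u N` are not entries of the matrix. -/
def tridiagonal [Zero R] (N : ℕ) (l d u : ℕ → R) : Matrix (Fin (N + 1)) (Fin (N + 1)) R :=
  Matrix.of fun x y =>
    if (y : ℕ) = x then d x
    else if (y : ℕ) = x + 1 then u x
    else if (x : ℕ) = y + 1 then l x
    else 0

/-- `g` satisfies the rows `1, …, N - 1` of the eigenvalue equation for `tridiagonal N l d u`
at `z`. -/
def IsInteriorSolution [Ring R] (N : ℕ) (l d u : ℕ → R) (z : R) (g : ℕ → R) : Prop :=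
  ∀ x, x + 1 < N → l (x + 1) * g x + (d (x + 1) - z) * g (x + 1) + u (x + 1) * g (x + 2) = 0

/-- The entry in row `0` of `(tridiagonal N l d u - z) g`, for `N ≠ 0`. -/
def leftResidual [Ring R] (d u : ℕ → R) (z : R) (g : ℕ → R) : R :=
  u 0 * g 1 + (d 0 - z) * g 0

/-- The entry in row `N` of `(tridiagonal N l d u - z) g`, for `N ≠ 0`. -/
def rightResidual [Ring R] (N : ℕ) (l d : ℕ → R) (z : R) (g : ℕ → R) : R :=
  l N * g (N - 1) + (d N - z) * g N

theorem tridiagonal_mulVec_apply [Semiring R] (g : ℕ → R) (x : Fin (N + 1)) :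
    (tridiagonal N l d u).mulVec (fun y => g y) x =
      (if (x : ℕ) = 0 then 0 else l x * g (x - 1)) + d x * g x +
        (if (x : ℕ) = N then 0 else u x * g (x + 1)) := by
  obtain ⟨x, hx⟩ := x
  have entries (y : Fin (N + 1)) : tridiagonal N l d u ⟨x, hx⟩ y * g y =
      (if (y : ℕ) = x - 1 then (if x = 0 then 0 else l x * g y) else 0) +
        (if (y : ℕ) = x then d x * g y else 0) + (if (y : ℕ) = x + 1 then u x * g y else 0) := by
    simp only [tridiagonal, Matrix.of_apply]
    split_ifs <;> first | omega | simp
  simp only [Matrix.mulVec, dotProduct, entries, Finset.sum_add_distrib]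
  rw [Fin.sum_univ_eq_sum_range
      (fun y => if y = x - 1 then (if x = 0 then 0 else l x * g y) else 0),
    Fin.sum_univ_eq_sum_range (fun y => if y = x then d x * g y else 0),
    Fin.sum_univ_eq_sum_range (fun y => if y = x + 1 then u x * g y else 0)]
  simp only [Finset.sum_ite_eq', Finset.mem_range, show x - 1 < N + 1 by omega, hx, if_true]
  congr 1
  split_ifs <;> first | omega | rfl

theorem tridiagonal_mulVec_eq_smul_iff [CommRing R] (hN : N ≠ 0) :
    (tridiagonal N l d u).mulVec (fun y => g y) = z • (fun y : Fin (N + 1) => g y) ↔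
      leftResidual d u z g = 0 ∧ IsInteriorSolution N l d u z g ∧
        rightResidual N l d z g = 0 := by
  simp only [funext_iff, tridiagonal_mulVec_apply, Pi.smul_apply, smul_eq_mul, Fin.forall_iff]
  constructor
  · intro h
    refine ⟨?_, fun x hx => ?_, ?_⟩
    · have := h 0 (by omega)
      simp only [hN.symm, if_true, if_false] at this
      rw [leftResidual]
      linear_combination this
    · have := h (x + 1) (by omega)
      simp only [hx.ne, x.succ_ne_zero, if_false, Nat.add_sub_cancel] at this
      linear_combination this
    · have := h N (by omega)
      simp only [hN, if_true, if_false] at this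
      rw [rightResidual]
      linear_combination this
  · rintro ⟨hleft, hinner, hright⟩ x hx
    rw [leftResidual] at hleft
    rw [rightResidual] at hright
    obtain rfl | hxN := eq_or_ne x N
    · simp only [hN, if_true, if_false]
      linear_combination hright
    obtain _ | x := x
    · simp only [hxN, if_true, if_false]
      linear_combination hleft
    · simp only [hxN, x.succ_ne_zero, if_false, Nat.add_sub_cancel]
      linear_combination hinner x (by omega)

end Ring

section Field

variable {K : Type*} [Field K] {N : ℕ} {l d u : ℕ → K} {z : K} {f g : ℕ → K}

/-- The solution of the three-term recurrence of a tridiagonal matrix with value `α` at `0` and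
left residual `w`. -/
def fundamentalSolution (l d u : ℕ → K) (z α w : K) : ℕ → K
  | 0 => α
  | 1 => (w + (z - d 0) * α) / u 0
  | x + 2 => ((z - d (x + 1)) * fundamentalSolution l d u z α w (x + 1) -
      l (x + 1) * fundamentalSolution l d u z α w x) / u (x + 1)

theorem leftResidual_fundamentalSolution (hu : u 0 ≠ 0) (α w : K) :
    leftResidual d u z (fundamentalSolution l d u z α w) = w := by
  simp only [leftResidual, fundamentalSolution]
  field_simp
  ring

theorem isInteriorSolution_fundamentalSolution (hu : ∀ x < N, u x ≠ 0) (α w : K) :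
    IsInteriorSolution N l d u z (fundamentalSolution l d u z α w) := by
  intro x hx
  have := hu _ hx
  simp only [fundamentalSolution]
  field_simp
  ring

theorem IsInteriorSolution.eq_add (hg : IsInteriorSolution N l d u z g) (hu : ∀ x < N, u x ≠ 0)
    {x : ℕ} (hx : x ≤ N) :
    g x = g 0 * fundamentalSolution l d u z 1 0 x +
      leftResidual d u z g * fundamentalSolution l d u z 0 1 x := by
  induction x using Nat.twoStepInduction with
  | zero => simp [fundamentalSolution]
  | one =>
    have := hu 0 hx
    simp only [fundamentalSolution, leftResidual]
    field_simp
    ring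
  | more x ih₀ ih₁ =>
    have hφ := isInteriorSolution_fundamentalSolution (l := l) (d := d) (z := z) hu 1 0 x hx
    have hψ := isInteriorSolution_fundamentalSolution (l := l) (d := d) (z := z) hu 0 1 x hx
    have hgx := hg x hx
    rw [ih₀ (by omega), ih₁ (by omega)] at hgx
    apply mul_left_cancel₀ (hu (x + 1) hx)
    linear_combination hgx - g 0 * hφ - leftResidual d u z g * hψ

theorem IsInteriorSolution.rightResidual_eq_add (hg : IsInteriorSolution N l d u z g)
    (hu : ∀ x < N, u x ≠ 0) :
    rightResidual N l d z g =
      g 0 * rightResidual N l d z (fundamentalSolution l d u z 1 0) +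
        leftResidual d u z g * rightResidual N l d z (fundamentalSolution l d u z 0 1) := by
  simp only [rightResidual]
  rw [hg.eq_add hu (Nat.sub_le N 1), hg.eq_add hu le_rfl]
  ring

theorem mem_spectrum_iff_exists_mulVec {ι : Type*} [Fintype ι] [DecidableEq ι]
    {A : Matrix ι ι K} : z ∈ spectrum K A ↔ ∃ v ≠ 0, A.mulVec v = z • v := by
  rw [← Matrix.spectrum_toLin', ← Module.End.hasEigenvalue_iff_mem_spectrum]
  constructor
  · intro h
    obtain ⟨v, hv⟩ := h.exists_hasEigenvector
    exact ⟨v, hv.2, by simpa using hv.apply_eq_smul⟩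
  · rintro ⟨v, hv, h⟩
    exact Module.End.hasEigenvalue_of_hasEigenvector
      ⟨Module.End.mem_eigenspace_iff.2 (by simpa using h), hv⟩

theorem IsInteriorSolution.mem_spectrum_tridiagonal_iff (hf : IsInteriorSolution N l d u z f)
    (hN : N ≠ 0) (hu : ∀ x < N, u x ≠ 0) (hf₀ : f 0 ≠ 0) (hleft : leftResidual d u z f = 0) :
    z ∈ spectrum K (tridiagonal N l d u) ↔ rightResidual N l d z f = 0 := by
  rw [mem_spectrum_iff_exists_mulVec]
  constructor
  · rintro ⟨v, hv, hTv⟩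
    obtain ⟨g, rfl⟩ : ∃ g : ℕ → K, v = fun y : Fin (N + 1) => g y :=
      ⟨fun x => if h : x < N + 1 then v ⟨x, h⟩ else 0, by ext y; simp [y.isLt]⟩
    obtain ⟨hgleft, hg, hgright⟩ := (tridiagonal_mulVec_eq_smul_iff hN).1 hTv
    have hg₀ : g 0 ≠ 0 := by
      intro hg₀
      refine hv (funext fun y => ?_)
      simp [hg.eq_add hu (Nat.lt_succ_iff.1 y.isLt), hg₀, hgleft]
    rw [hg.rightResidual_eq_add hu, hgleft] at hgright
    rw [hf.rightResidual_eq_add hu, hleft]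
    simp_all
  · intro hright
    refine ⟨fun y => f y, fun h => hf₀ (congrFun h 0), ?_⟩
    exact (tridiagonal_mulVec_eq_smul_iff hN).2 ⟨hleft, hf, hright⟩

/-- The characteristic function of `tridiagonal N l d u`: up to a nonzero factor, its characteristic
polynomial evaluated at `z`, provided `u` does not vanish on `0, …, N - 1`. -/
def charResidual (N : ℕ) (l d u : ℕ → K) (z : K) : K :=
  rightResidual N l d z (fundamentalSolution l d u z 1 0)

theorem mem_spectrum_tridiagonal_iff (hN : N ≠ 0) (hu : ∀ x < N, u x ≠ 0) :
    z ∈ spectrum K (tridiagonal N l d u) ↔ charResidual N l d u z = 0 :=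
  (isInteriorSolution_fundamentalSolution hu 1 0).mem_spectrum_tridiagonal_iff hN hu
    (by simp [fundamentalSolution])
    (leftResidual_fundamentalSolution (hu 0 (Nat.pos_of_ne_zero hN)) 1 0)

theorem eval_eq_fundamentalSolution_mul_prod (hu : ∀ x < N, u x ≠ 0) {P : ℕ → K[X]}
    (hP₀ : P 0 = 1) (hP₁ : P 1 = X - C (d 0))
    (hP : ∀ x, x + 2 ≤ N →
      P (x + 2) = (X - C (d (x + 1))) * P (x + 1) - C (u x * l (x + 1)) * P x)
    {x : ℕ} (hx : x ≤ N) :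
    (P x).eval z = fundamentalSolution l d u z 1 0 x * ∏ i ∈ Finset.range x, u i := by
  induction x using Nat.twoStepInduction with
  | zero => simp [hP₀, fundamentalSolution]
  | one => simp [hP₁, fundamentalSolution, hu 0 hx]
  | more x ih₀ ih₁ =>
    have := hu (x + 1) hx
    simp only [hP x hx, eval_sub, eval_mul, eval_X, eval_C, ih₀ (by omega), ih₁ (by omega),
      Finset.prod_range_succ, fundamentalSolution]
    field_simp

end Field

section Centrosymmetric

variable {R K : Type*} {n : ℕ}

/-- The matrix `tridiagonal n l d u` is invariant under the reflection `x ↦ n - x`. -/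
structure IsCentrosymmetric (n : ℕ) (l d u : ℕ → R) : Prop where
  diag : ∀ x ≤ n, d (n - x) = d x
  offDiag : ∀ x < n, l (n - x) = u x

section Reflection

variable {l d u : ℕ → R} {z : R} {g : ℕ → R}

theorem IsCentrosymmetric.diag_last (h : IsCentrosymmetric n l d u) : d n = d 0 :=
  h.diag 0 n.zero_le

theorem IsCentrosymmetric.sub_last (h : IsCentrosymmetric n l d u) (hn : n ≠ 0) : l n = u 0 :=
  h.offDiag 0 (Nat.pos_of_ne_zero hn)

theorem IsInteriorSolution.reflect [CommRing R] (hg : IsInteriorSolution n l d u z g)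
    (h : IsCentrosymmetric n l d u) : IsInteriorSolution n l d u z fun x => g (n - x) := by
  intro x hx
  obtain ⟨y, rfl⟩ := Nat.exists_eq_add_of_lt hx
  have hgy := hg y (by omega)
  have hl : l (y + 1) = u (x + 1) := by rw [← h.offDiag (x + 1) hx]; congr 1; omega
  have hu : l (x + 1) = u (y + 1) := by rw [← h.offDiag (y + 1) (by omega)]; congr 1; omega
  have hd : d (y + 1) = d (x + 1) := by rw [← h.diag (x + 1) hx.le]; congr 1; omega
  simp only [show x + 1 + y + 1 - x = y + 2 by omega,
    show x + 1 + y + 1 - (x + 1) = y + 1 by omega, show x + 1 + y + 1 - (x + 2) = y by omega]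
  linear_combination hgy - g y * hl + g (y + 2) * hu - g (y + 1) * hd

theorem IsCentrosymmetric.leftResidual_reflect [Ring R] (h : IsCentrosymmetric n l d u)
    (hn : n ≠ 0) : leftResidual d u z (fun x => g (n - x)) = rightResidual n l d z g := by
  simp [leftResidual, rightResidual, h.diag_last, h.sub_last hn]

theorem IsCentrosymmetric.rightResidual_reflect [Ring R] (h : IsCentrosymmetric n l d u)
    (hn : n ≠ 0) : rightResidual n l d z (fun x => g (n - x)) = leftResidual d u z g := by
  simp [leftResidual, rightResidual, h.diag_last, h.sub_last hn,
    Nat.sub_sub_self (Nat.one_le_iff_ne_zero.2 hn)]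

end Reflection

section Transfer

variable [Field K] {l d u : ℕ → K} {z : K} {g : ℕ → K}

-- This identity and the next one are the first column of `M * M = 1`, where the transfer matrix `M`
-- maps the value and the residual at the left end of the cell to those at the right end.
theorem IsCentrosymmetric.sq_add_mul_eq_one (h : IsCentrosymmetric n l d u) (hn : n ≠ 0)
    (hu : ∀ x < n, u x ≠ 0) :
    fundamentalSolution l d u z 1 0 n ^ 2 +
      charResidual n l d u z * fundamentalSolution l d u z 0 1 n = 1 := by
  have hφ := (isInteriorSolution_fundamentalSolution (z := z) hu 1 0).reflect h
  have := hφ.eq_add hu le_rfl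
  simp only [h.leftResidual_reflect hn, Nat.sub_self, Nat.sub_zero] at this
  rw [fundamentalSolution] at this
  rw [charResidual]
  linear_combination -this

theorem IsCentrosymmetric.mul_add_eq_zero (h : IsCentrosymmetric n l d u) (hn : n ≠ 0)
    (hu : ∀ x < n, u x ≠ 0) :
    charResidual n l d u z * (fundamentalSolution l d u z 1 0 n +
      rightResidual n l d z (fundamentalSolution l d u z 0 1)) = 0 := by
  have hφ := (isInteriorSolution_fundamentalSolution (z := z) hu 1 0).reflect h
  have := hφ.rightResidual_eq_add hu
  rw [h.leftResidual_reflect hn, h.rightResidual_reflect hn,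
    leftResidual_fundamentalSolution (hu 0 (Nat.pos_of_ne_zero hn)), Nat.sub_zero] at this
  rw [charResidual]
  linear_combination -this

theorem IsCentrosymmetric.apply_last_eq (h : IsCentrosymmetric n l d u) (hn : n ≠ 0)
    (hu : ∀ x < n, u x ≠ 0) (hg : IsInteriorSolution n l d u z g) {V : K}
    (hV : leftResidual d u z g = charResidual n l d u z * V) :
    g n = fundamentalSolution l d u z 1 0 n * g 0 +
      (1 - fundamentalSolution l d u z 1 0 n ^ 2) * V := by
  rw [hg.eq_add hu le_rfl, hV]
  linear_combination V * h.sq_add_mul_eq_one (z := z) hn hu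

theorem IsCentrosymmetric.rightResidual_eq (h : IsCentrosymmetric n l d u) (hn : n ≠ 0)
    (hu : ∀ x < n, u x ≠ 0) (hg : IsInteriorSolution n l d u z g) {V : K}
    (hV : leftResidual d u z g = charResidual n l d u z * V) :
    rightResidual n l d z g =
      charResidual n l d u z * (g 0 - fundamentalSolution l d u z 1 0 n * V) := by
  rw [hg.rightResidual_eq_add hu, hV, ← charResidual]
  linear_combination V * h.mul_add_eq_zero (z := z) hn hu

end Transfer

end Centrosymmetric

section Path

variable {K : Type*} [Field K] {k : ℕ} {p : ℕ → K} {c : K}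

/-- The probabilistic Laplacian of the path `0, …, k` whose walk steps from `x` to `x + 1` with
probability `p x` and to `x - 1` with probability `1 - p x`. -/
def pathLaplacian (k : ℕ) (p : ℕ → K) : Matrix (Fin (k + 1)) (Fin (k + 1)) K :=
  tridiagonal k (fun x => -(1 - p x)) (fun _ => 1) (fun x => -p x)

/-- The pair `(U, V)` at the vertex `i` of the path: `U` is the solution of the eigenvalue equation
of `pathLaplacian` at `1 - c` with `U 0 = 1`, and `V` is its flux to the right, normalised so that
`U (i + 1) = c * U i + (1 - c ^ 2) * V i`. Carrying `V` along keeps the information that this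
equation loses at `c ^ 2 = 1`. -/
def pathState (p : ℕ → K) (c : K) : ℕ → K × K
  | 0 => (1, 0)
  | i + 1 =>
    (c * (pathState p c i).1 + (1 - c ^ 2) * (pathState p c i).2,
      -((1 - p (i + 1)) / p (i + 1)) * ((pathState p c i).1 - c * (pathState p c i).2))

/-- The normalised flux of `pathState p c` arriving at the vertex `i + 1` from the vertex `i`. -/
def pathFlux (p : ℕ → K) (c : K) (i : ℕ) : K :=
  (pathState p c i).1 - c * (pathState p c i).2

theorem pathState_succ_snd (i : ℕ) :
    (pathState p c (i + 1)).2 = -((1 - p (i + 1)) / p (i + 1)) * pathFlux p c i := rfl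

theorem mul_pathFlux (i : ℕ) :
    (1 - c ^ 2) * pathFlux p c i = (pathState p c i).1 - c * (pathState p c (i + 1)).1 := by
  simp only [pathFlux, pathState]
  ring

theorem isInteriorSolution_pathState (hp : ∀ i < k, p i ≠ 0) :
    IsInteriorSolution k (fun x => -(1 - p x)) (fun _ => 1) (fun x => -p x) (1 - c)
      fun i => (pathState p c i).1 := by
  intro i hi
  have balance : p (i + 1) * (pathState p c (i + 1)).2 = -(1 - p (i + 1)) * pathFlux p c i := by
    have := hp _ hi
    rw [pathState_succ_snd]
    field_simp
  have step : (pathState p c (i + 2)).1 =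
    c * (pathState p c (i + 1)).1 + (1 - c ^ 2) * (pathState p c (i + 1)).2 := rfl
  linear_combination -p (i + 1) * step - (1 - c ^ 2) * balance +
    (1 - p (i + 1)) * mul_pathFlux (p := p) (c := c) i

theorem mem_spectrum_pathLaplacian_iff (hp : ∀ i < k, p i ≠ 0) (hp₀ : p 0 = 1) (hpk : p k = 0) :
    1 - c ∈ spectrum K (pathLaplacian k p) ↔ (1 - c ^ 2) * pathFlux p c (k - 1) = 0 := by
  have hk : k ≠ 0 := by rintro rfl; simp [hp₀] at hpk
  rw [pathLaplacian, (isInteriorSolution_pathState hp).mem_spectrum_tridiagonal_iff hk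
    (fun i hi => neg_ne_zero.2 (hp i hi)) (by simp [pathState])
    (by simp [leftResidual, pathState, hp₀])]
  rw [mul_pathFlux, Nat.sub_add_cancel (Nat.one_le_iff_ne_zero.2 hk), rightResidual, hpk,
    ← neg_eq_zero]
  ring_nf

theorem pathFlux_eq_pow_mul {F : Type*} [Field F] [LinearOrder F] [IsStrictOrderedRing F]
    [Algebra F K] {q : ℕ → F} {i : ℕ} (hq : ∀ j, 1 ≤ j → j ≤ i → 0 < q j ∧ q j ≤ 1)
    (hc : c ^ 2 = 1) :
    ∃ w : F, 0 < w ∧ pathFlux (fun j => algebraMap F K (q j)) c i = c ^ i * algebraMap F K w := by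
  have hU (j : ℕ) : (pathState (fun j => algebraMap F K (q j)) c j).1 = c ^ j := by
    induction j with
    | zero => simp [pathState]
    | succ j ih => rw [pathState, ih, hc]; ring
  induction i with
  | zero => exact ⟨1, one_pos, by simp [pathFlux, pathState]⟩
  | succ i ih =>
    obtain ⟨w, hw, hflux⟩ := ih fun j h₁ h₂ => hq j h₁ (by omega)
    obtain ⟨hpos, hle⟩ := hq (i + 1) (by omega) le_rfl
    have := sub_nonneg.2 hle
    refine ⟨1 + (1 - q (i + 1)) / q (i + 1) * w, by positivity, ?_⟩
    rw [pathFlux, hU, pathState_succ_snd, hflux]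
    simp only [map_add, map_mul, map_sub, map_div₀, map_one]
    ring

theorem pathFlux_eq_zero_iff {F : Type*} [Field F] [LinearOrder F] [IsStrictOrderedRing F]
    [Algebra F K] {q : ℕ → F} (hq₀ : q 0 = 1) (hqk : q k = 0)
    (hq : ∀ i < k, 0 < q i ∧ q i ≤ 1) :
    pathFlux (fun i => algebraMap F K (q i)) c (k - 1) = 0 ↔
      1 - c ∈ spectrum K (pathLaplacian k fun i => algebraMap F K (q i)) ∧
        1 - c ∉ ({0, 2} : Set K) := by
  have hk : k ≠ 0 := by rintro rfl; simp [hq₀] at hqk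
  have hq_ne : ∀ i < k, algebraMap F K (q i) ≠ 0 :=
    fun i hi => (_root_.map_ne_zero _).2 (hq i hi).1.ne'
  have hmem : 1 - c ∈ ({0, 2} : Set K) ↔ 1 - c ^ 2 = 0 := by
    rw [show 1 - c ^ 2 = (1 - c) * (2 - (1 - c)) by ring, mul_eq_zero, sub_eq_zero (a := (2 : K)),
      eq_comm (a := (2 : K))]
    rfl
  rw [mem_spectrum_pathLaplacian_iff hq_ne (by simp [hq₀]) (by simp [hqk]), hmem, mul_eq_zero]
  refine ⟨fun hflux => ⟨Or.inr hflux, fun hc => ?_⟩, fun h => h.1.resolve_left h.2⟩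
  replace hc : c ^ 2 = 1 := (sub_eq_zero.1 hc).symm
  obtain ⟨w, hw, hw'⟩ := pathFlux_eq_pow_mul (i := k - 1)
    (fun j _ hj => hq j (hj.trans_lt (Nat.sub_one_lt hk))) hc
  rw [hw'] at hflux
  have hc₀ : c ≠ 0 := by rintro rfl; simp at hc
  exact mul_ne_zero (pow_ne_zero _ hc₀) ((_root_.map_ne_zero _).2 hw.ne') hflux

end Path

section Chain

variable {K : Type*} [Field K] {n k : ℕ} {l d u p : ℕ → K} {z : K} {f : ℕ → K}

/-- The subdiagonal of `chain`, indexed by the row: the row `i * n` is the vertex `i` of the path,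
where the last row of the cell to its left is weighted by `1 - p i`. -/
def chainSub (n : ℕ) (l p : ℕ → K) (x : ℕ) : K :=
  if x % n = 0 then (1 - p (x / n)) * l n else l (x % n)

/-- The superdiagonal of `chain`, indexed by the row: at the vertex `i * n` the first row of the
cell to its right is weighted by `p i`. -/
def chainSuper (n : ℕ) (u p : ℕ → K) (x : ℕ) : K :=
  if x % n = 0 then p (x / n) * u 0 else u (x % n)

/-- The matrix obtained by substituting copies of the cell `tridiagonal n l d u` for the `k` edges
of the path of `pathLaplacian k p`. The diagonal `d (x % n)` never uses `d n`, so this is meant for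
cells with `d n = d 0`. -/
def chain (n k : ℕ) (l d u p : ℕ → K) : Matrix (Fin (k * n + 1)) (Fin (k * n + 1)) K :=
  tridiagonal (k * n) (chainSub n l p) (fun x => d (x % n)) (chainSuper n u p)

/-- The restriction of a function on a chain to its `i`-th cell. -/
def restrictCell (n : ℕ) (f : ℕ → K) (i : ℕ) : ℕ → K := fun x => f (i * n + x)

theorem chainSub_mul (hn : n ≠ 0) (i : ℕ) : chainSub n l p (i * n) = (1 - p i) * l n := by
  simp [chainSub, Nat.mul_div_cancel _ (Nat.pos_of_ne_zero hn)]

theorem chainSuper_mul (hn : n ≠ 0) (i : ℕ) : chainSuper n u p (i * n) = p i * u 0 := by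
  simp [chainSuper, Nat.mul_div_cancel _ (Nat.pos_of_ne_zero hn)]

theorem chainSuper_ne_zero (hp : ∀ i < k, p i ≠ 0) (hu : ∀ x < n, u x ≠ 0) {x : ℕ}
    (hx : x < k * n) : chainSuper n u p x ≠ 0 := by
  have hn : 0 < n := Nat.pos_of_mul_pos_left (Nat.zero_lt_of_lt hx)
  unfold chainSuper
  split_ifs
  · exact mul_ne_zero (hp _ ((Nat.div_lt_iff_lt_mul hn).2 hx)) (hu 0 hn)
  · exact hu _ (Nat.mod_lt x hn)

theorem IsInteriorSolution.restrict
    (hf : IsInteriorSolution (k * n) (chainSub n l p) (fun x => d (x % n)) (chainSuper n u p) z f)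
    {i : ℕ} (hi : i < k) : IsInteriorSolution n l d u z (restrictCell n f i) := by
  intro x hx
  have hle : (i + 1) * n ≤ k * n := Nat.mul_le_mul_right n hi
  have hrow := hf (i * n + x) (by linarith)
  have hmod : (i * n + x + 1) % n = x + 1 := by
    rw [add_assoc, Nat.mul_add_mod_self_right, Nat.mod_eq_of_lt hx]
  simp only [chainSub, chainSuper, hmod, x.succ_ne_zero, if_false] at hrow
  exact hrow

theorem IsInteriorSolution.junction
    (hf : IsInteriorSolution (k * n) (chainSub n l p) (fun x => d (x % n)) (chainSuper n u p) z f)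
    (h : IsCentrosymmetric n l d u) (hn : n ≠ 0) {i : ℕ} (hi : i + 1 < k) :
    (1 - p (i + 1)) * rightResidual n l d z (restrictCell n f i) +
      p (i + 1) * leftResidual d u z (restrictCell n f (i + 1)) = 0 := by
  obtain ⟨m, rfl⟩ := Nat.exists_eq_add_one_of_ne_zero hn
  have hnode : i * (m + 1) + m + 1 = (i + 1) * (m + 1) := by ring
  have hlt : (i + 1) * (m + 1) < k * (m + 1) := Nat.mul_lt_mul_of_pos_right hi m.succ_pos
  have hrow := hf (i * (m + 1) + m) (by omega)
  simp only [hnode, chainSub_mul hn, chainSuper_mul hn, Nat.mul_mod_left,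
    show i * (m + 1) + m + 2 = (i + 1) * (m + 1) + 1 by omega] at hrow
  simp only [rightResidual, leftResidual, restrictCell, h.diag_last, Nat.add_sub_cancel,
    ← add_assoc, hnode, add_zero]
  linear_combination hrow

theorem rightResidual_chain (h : IsCentrosymmetric n l d u) (hn : n ≠ 0) (hpk : p (k + 1) = 0) :
    rightResidual ((k + 1) * n) (chainSub n l p) (fun x => d (x % n)) z f =
      rightResidual n l d z (restrictCell n f k) := by
  simp only [rightResidual, restrictCell, chainSub_mul hn, hpk, Nat.mul_mod_left, h.diag_last,
    sub_zero, one_mul]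
  rw [Nat.succ_mul, Nat.add_sub_assoc (Nat.one_le_iff_ne_zero.2 hn)]

theorem restrictCell_eq_pathState (h : IsCentrosymmetric n l d u) (hn : n ≠ 0)
    (hu : ∀ x < n, u x ≠ 0) (hp : ∀ i < k, p i ≠ 0)
    (hf : IsInteriorSolution (k * n) (chainSub n l p) (fun x => d (x % n)) (chainSuper n u p) z f)
    (hf₀ : f 0 = 1) (hleft : leftResidual d u z f = 0) {i : ℕ} (hi : i < k) :
    restrictCell n f i 0 = (pathState p (fundamentalSolution l d u z 1 0 n) i).1 ∧
      leftResidual d u z (restrictCell n f i) =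
        charResidual n l d u z * (pathState p (fundamentalSolution l d u z 1 0 n) i).2 := by
  induction i with
  | zero =>
    have hcell : restrictCell n f 0 = f := by funext x; simp [restrictCell]
    simp [hcell, hf₀, hleft, pathState]
  | succ i ih =>
    have hi' : i < k := by omega
    obtain ⟨hU, hV⟩ := ih hi'
    constructor
    · rw [pathState, ← hU, ← h.apply_last_eq hn hu (hf.restrict hi') hV]
      simp [restrictCell, Nat.succ_mul]
    · have hjunction := hf.junction h hn hi
      rw [h.rightResidual_eq hn hu (hf.restrict hi') hV, hU] at hjunction
      have hpi := hp _ hi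
      rw [pathState_succ_snd, pathFlux]
      field_simp
      linear_combination hjunction

theorem mem_spectrum_chain_iff (h : IsCentrosymmetric n l d u) (hn : n ≠ 0)
    (hu : ∀ x < n, u x ≠ 0) (hp : ∀ i < k, p i ≠ 0) (hp₀ : p 0 = 1) (hpk : p k = 0) :
    z ∈ spectrum K (chain n k l d u p) ↔
      pathFlux p (fundamentalSolution l d u z 1 0 n) (k - 1) = 0 ∨ charResidual n l d u z = 0 := by
  obtain _ | k := k
  · simp [hp₀] at hpk
  have hsuper : ∀ x < (k + 1) * n, chainSuper n u p x ≠ 0 := fun x => chainSuper_ne_zero hp hu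
  rw [chain, mem_spectrum_tridiagonal_iff (mul_ne_zero k.succ_ne_zero hn) hsuper, charResidual,
    rightResidual_chain h hn hpk]
  set f := fundamentalSolution (chainSub n l p) (fun x => d (x % n)) (chainSuper n u p) z 1 0
  have hf := isInteriorSolution_fundamentalSolution (l := chainSub n l p)
    (d := fun x => d (x % n)) (z := z) hsuper 1 0
  have hleft : leftResidual d u z f = 0 := by
    have hN : 0 < (k + 1) * n := Nat.mul_pos k.succ_pos (Nat.pos_of_ne_zero hn)
    simpa [leftResidual, chainSuper, hp₀] using
      leftResidual_fundamentalSolution (l := chainSub n l p) (d := fun x => d (x % n)) (z := z)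
        (hsuper 0 hN) 1 0
  obtain ⟨hU, hV⟩ := restrictCell_eq_pathState h hn hu hp hf rfl hleft k.lt_succ_self
  rw [h.rightResidual_eq hn hu (hf.restrict k.lt_succ_self) hV, hU, mul_eq_zero, or_comm,
    Nat.add_sub_cancel, pathFlux]

end Chain

theorem statement_14_general {F K : Type*} [Field F] [LinearOrder F] [IsStrictOrderedRing F]
    [Field K] [Algebra F K] {n : ℕ} (hn : n ≠ 0) {l d u : ℕ → K} (h : IsCentrosymmetric n l d u)
    (hu : ∀ x < n, u x ≠ 0) {P : ℕ → K[X]} (hP₀ : P 0 = 1) (hP₁ : P 1 = X - C (d 0))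
    (hP : ∀ x, x + 2 ≤ n →
      P (x + 2) = (X - C (d (x + 1))) * P (x + 1) - C (u x * l (x + 1)) * P x)
    {k : ℕ} {p : ℕ → F} (hp₀ : p 0 = 1) (hpk : p k = 0)
    (hp : ∀ i < k, 0 < p i ∧ p i ≤ 1) :
    spectrum K (chain n k l d u fun i => algebraMap F K (p i)) =
      {z : K |
        1 - (P n).eval z / ∏ i ∈ Finset.range n, u i ∈
          spectrum K (pathLaplacian k fun i => algebraMap F K (p i)) ∧
        1 - (P n).eval z / ∏ i ∈ Finset.range n, u i ∉ ({0, 2} : Set K)} ∪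
      spectrum K (tridiagonal n l d u) := by
  ext z
  have hp_ne : ∀ i < k, algebraMap F K (p i) ≠ 0 :=
    fun i hi => (_root_.map_ne_zero _).2 (hp i hi).1.ne'
  have hprod : ∏ i ∈ Finset.range n, u i ≠ 0 :=
    Finset.prod_ne_zero_iff.2 fun i hi => hu i (Finset.mem_range.1 hi)
  have hR : (P n).eval z / ∏ i ∈ Finset.range n, u i = fundamentalSolution l d u z 1 0 n := by
    rw [eval_eq_fundamentalSolution_mul_prod hu hP₀ hP₁ hP le_rfl, mul_div_cancel_right₀ _ hprod]
  rw [mem_spectrum_chain_iff h hn hu hp_ne (by simp [hp₀]) (by simp [hpk]),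
    pathFlux_eq_zero_iff hp₀ hpk hp, ← mem_spectrum_tridiagonal_iff hn hu, ← hR]
  rfl

theorem prod_Icc_one_eq_prod_range {M : Type*} [CommMonoid M] (f : ℕ → M) (n : ℕ) :
    ∏ i ∈ Finset.Icc 1 n, f i = ∏ i ∈ Finset.range n, f (i + 1) := by
  rw [Finset.range_eq_Ico, Finset.prod_Ico_add', zero_add, Finset.Ico_add_one_right_eq_Icc]

section Real

variable {a b p : ℕ → ℝ} {n k : ℕ}

theorem map_Jcs : (Jcs n a b).map Complex.ofReal =
    tridiagonal n (fun x => (a (n + 1 - x) : ℂ)) (fun x => (b x : ℂ)) fun x => (a (x + 1) : ℂ) := by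
  ext x y
  simp only [Jcs, tridiagonal, Matrix.map_apply, Matrix.of_apply]
  split_ifs with _ _ hxy
  · rfl
  · rfl
  · rw [hxy, Nat.add_sub_add_right]
  · rfl

theorem map_DeltaP : (DeltaP k p).map Complex.ofReal =
    pathLaplacian k fun i => algebraMap ℝ ℂ (p i) := by
  ext x y
  simp only [DeltaP, pathLaplacian, tridiagonal, Matrix.map_apply, Matrix.of_apply]
  split_ifs <;> simp

theorem map_Jsub : (Jsub n k a b p).map Complex.ofReal =
    chain n k (fun x => (a (n + 1 - x) : ℂ)) (fun x => (b x : ℂ)) (fun x => (a (x + 1) : ℂ))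
      fun i => algebraMap ℝ ℂ (p i) := by
  ext x y
  simp only [Jsub, chain, chainSub, chainSuper, tridiagonal, Matrix.map_apply, Matrix.of_apply]
  split_ifs <;> simp

theorem isCentrosymmetric_ofReal (hb : ∀ j, j ≤ n → b j = b (n - j)) :
    IsCentrosymmetric n (fun x => (a (n + 1 - x) : ℂ)) (fun x => (b x : ℂ))
      fun x => (a (x + 1) : ℂ) where
  diag x hx := by rw [← hb x hx]
  offDiag x hx := by rw [show n + 1 - (n - x) = x + 1 by omega]

end Real

/-- The spectrum over `ℂ` of the piecewise centrosymmetric Jacobi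
matrix `J` equals `{z : R(z) ∈ σ(Δ_p) and R(z) ∉ {0,2}} ∪ σ(J_cs)`, where
`R(z) = 1 − P_{n0}(z)/∏ a(i)` is the spectral decimation function. -/
theorem statement_14 (n0 : ℕ) (hn0 : 2 ≤ n0) (a b : ℕ → ℝ)
    (ha : ∀ i, 1 ≤ i → i ≤ n0 → a i ≠ 0)
    (hb : ∀ j, j ≤ n0 → b j = b (n0 - j))
    (hpos : ∀ j, 1 ≤ j → j ≤ n0 → 0 < a j * a (n0 + 1 - j))
    (P : ℕ → Polynomial ℝ)
    (hP0 : P 0 = 1) (hP1 : P 1 = X - C (b 0))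
    (hP : ∀ k, 2 ≤ k → k ≤ n0 + 1 →
      P k = (X - C (b (k - 1))) * P (k - 1) - C (a (k - 1) * a (n0 + 2 - k)) * P (k - 2))
    (k0 : ℕ) (hk0 : 2 ≤ k0) (p : ℕ → ℝ)
    (hp0 : p 0 = 1) (hpk0 : p k0 = 0)
    (hp : ∀ k, 1 ≤ k → k < k0 → 0 < p k ∧ p k < 1) :
    spectrum ℂ ((Jsub n0 k0 a b p).map Complex.ofReal) =
      {z : ℂ |
        (1 - Polynomial.aeval z (P n0) / ∏ i ∈ Finset.Icc 1 n0, (a i : ℂ)) ∈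
            spectrum ℂ ((DeltaP k0 p).map Complex.ofReal) ∧
        (1 - Polynomial.aeval z (P n0) / ∏ i ∈ Finset.Icc 1 n0, (a i : ℂ)) ∉
            ({0, 2} : Set ℂ)} ∪
      spectrum ℂ ((Jcs n0 a b).map Complex.ofReal) := by
  have hP' (k : ℕ) (hk : k + 2 ≤ n0) := hP (k + 2) (by omega) (by omega)
  have hp' (i : ℕ) (hi : i < k0) : 0 < p i ∧ p i ≤ 1 := by
    obtain rfl | hpos := i.eq_zero_or_pos
    · simp [hp0]
    · exact (hp i hpos hi).imp_right le_of_lt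
  rw [map_Jsub, map_DeltaP, map_Jcs, prod_Icc_one_eq_prod_range]
  simpa [eval_map_algebraMap] using statement_14_general (by omega) (isCentrosymmetric_ofReal hb)
    (fun x hx => Complex.ofReal_ne_zero.2 (ha (x + 1) (by omega) hx))
    (P := fun k => (P k).map (algebraMap ℝ ℂ)) (by simp [hP0]) (by simp [hP1])
    (fun k hk => by simp [hP' k hk]) hp0 hpk0 hp'
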